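/- Let G^(1), G^(2) be templates, W^(1) ⊆ V^(1), W^(2) ⊆ V^(2), and let M̲ be a set of node matches. Then the number of matchings M in the shadow class M_shadow(W^(1),W^(2),M̲) — i.e., matchings M whose set of semi-matched pairs equals M̲ and whose unmatched node sets in G^(1) and G^(2) are exactly W^(1) and W^(2) — satisfies |M_shadow(W^(1),W^(2),M̲)| ≤ min(|Aut(G^(1))|, |Aut(G^(2))|). -/

import Mathlib

/-!
Two matchings `M`, `N` in the same shadow class match the same nodes, so sending a matched node `a`
of `G^(1)` to the `N`-preimage of its `M`-partner, and fixing the unmatched nodes, is a permutation.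
It fixes the distinguished nodes because `M` and `N` agree there. It preserves edges: an edge that
`M` matches is carried to an edge of `G^(2)`, and back to an edge of `G^(1)` if `N` matches it.
If either step fails, each endpoint is unmatched or belongs to a semi-matched pair, on which `M` and
`N` agree, so both endpoints are fixed. For a fixed `N` the permutation determines `M`, hence the
bound by `|Aut(G^(1))|`; the bound by `|Aut(G^(2))|` follows by exchanging the two graphs.
-/

open Classical Finset

noncomputable section

namespace SBM

/-- Index type for the edge slots of a graph on `n` nodes: ordered pairs `i < j`. -/
abbrev Pairs (n : ℕ) := {p : Fin n × Fin n // p.1 < p.2}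

/-- A configuration of edges: one Boolean per pair `i < j`. -/
abbrev EdgeConf (n : ℕ) := Pairs n → Bool

/-- Community labels of the `n` nodes, with `K` communities. -/
abbrev Lab (n K : ℕ) := Fin n → Fin K

/-- The recentered symmetric adjacency entries `Y i j = Y*_{ij} - q` (and `0` on the diagonal). -/
def Ymat (n : ℕ) (q : ℝ) (y : EdgeConf n) (i j : Fin n) : ℝ :=
  if h : i = j then 0
  else (if y ⟨(min i j, max i j), min_lt_max.mpr h⟩ then 1 else 0) - q

/-- Conditional connection probability of a pair given the labels. -/
def pEdge (n K : ℕ) (q lam : ℝ) (z : Lab n K) (p : Pairs n) : ℝ :=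
  if z p.1.1 = z p.1.2 then q + lam else q

/-- SBM probability weight of a configuration `(z, y)`: labels are i.i.d. uniform on `Fin K`
and, conditionally on `z`, edges are independent Bernoulli. -/
def wt (n K : ℕ) (q lam : ℝ) (z : Lab n K) (y : EdgeConf n) : ℝ :=
  ((K : ℝ)⁻¹) ^ n *
    ∏ p : Pairs n, (if y p then pEdge n K q lam z p else 1 - pEdge n K q lam z p)

/-- Expectation under the SBM. -/
def expec (n K : ℕ) (q lam : ℝ) (F : Lab n K → EdgeConf n → ℝ) : ℝ :=
  ∑ z : Lab n K, ∑ y : EdgeConf n, wt n K q lam z y * F z y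

/-- Expectation conditionally on `z i = z j`. -/
def expecEq (n K : ℕ) (q lam : ℝ) (i j : Fin n) (F : Lab n K → EdgeConf n → ℝ) : ℝ :=
  expec n K q lam (fun z y => if z i = z j then F z y else 0) /
    expec n K q lam (fun z _ => if z i = z j then 1 else 0)

/-- Expectation conditionally on `z i ≠ z j`. -/
def expecNe (n K : ℕ) (q lam : ℝ) (i j : Fin n) (F : Lab n K → EdgeConf n → ℝ) : ℝ :=
  expec n K q lam (fun z y => if z i ≠ z j then F z y else 0) /
    expec n K q lam (fun z _ => if z i ≠ z j then 1 else 0)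

/-- Variance conditionally on `z i = z j`. -/
def varEq (n K : ℕ) (q lam : ℝ) (i j : Fin n) (F : Lab n K → EdgeConf n → ℝ) : ℝ :=
  expecEq n K q lam i j (fun z y => F z y ^ 2) - expecEq n K q lam i j F ^ 2

/-- Variance conditionally on `z i ≠ z j`. -/
def varNe (n K : ℕ) (q lam : ℝ) (i j : Fin n) (F : Lab n K → EdgeConf n → ℝ) : ℝ :=
  expecNe n K q lam i j (fun z y => F z y ^ 2) - expecNe n K q lam i j F ^ 2

/-- The (centered) membership indicator `x = 1{z i0 = z i1} - 1/K`. -/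
def xind (n K : ℕ) (i0 i1 : Fin n) (z : Lab n K) : ℝ :=
  (if z i0 = z i1 then 1 else 0) - 1 / K

/-- A template: a finite simple graph on `Fin v` (edges stored as ordered pairs `a < b`)
with the two distinguished nodes `0` and `1`. -/
structure Template where
  v : ℕ
  hv : 2 ≤ v
  E : Finset (Fin v × Fin v)
  hE : ∀ e ∈ E, e.1 < e.2

namespace Template

/-- First distinguished node. -/
def v1 (T : Template) : Fin T.v := ⟨0, by have := T.hv; omega⟩

/-- Second distinguished node. -/
def v2 (T : Template) : Fin T.v := ⟨1, by have := T.hv; omega⟩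

/-- The underlying simple graph of a template. -/
def graph (T : Template) : SimpleGraph (Fin T.v) :=
  SimpleGraph.fromRel fun a b => (a, b) ∈ T.E

end Template

/-- Labelings `Π_V`: injections sending the distinguished nodes to the nodes `0` and `1`. -/
def PiV (n : ℕ) (hn : 2 ≤ n) (T : Template) : Finset (Fin T.v ↪ Fin n) :=
  Finset.univ.filter fun π =>
    π T.v1 = (⟨0, by omega⟩ : Fin n) ∧ π T.v2 = (⟨1, by omega⟩ : Fin n)

/-- The monomial `P_{G,π}(Y) = ∏_{(u,w) ∈ E} Y_{π u, π w}`. -/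
def PG (n : ℕ) (q : ℝ) (T : Template) (π : Fin T.v ↪ Fin n) (y : EdgeConf n) : ℝ :=
  ∏ e ∈ T.E, Ymat n q y (π e.1) (π e.2)

/-- A matching between the node sets of two templates: no node appears twice. -/
def IsMatching (T1 T2 : Template) (M : Finset (Fin T1.v × Fin T2.v)) : Prop :=
  (∀ p ∈ M, ∀ p' ∈ M, (p : Fin T1.v × Fin T2.v).1 = (p' : Fin T1.v × Fin T2.v).1 → p = p') ∧
  (∀ p ∈ M, ∀ p' ∈ M, (p : Fin T1.v × Fin T2.v).2 = (p' : Fin T1.v × Fin T2.v).2 → p = p')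

/-- `Π(M)`: pairs of labelings compatible with the matching `M`. -/
def PiM (n : ℕ) (hn : 2 ≤ n) (T1 T2 : Template) (M : Finset (Fin T1.v × Fin T2.v)) :
    Set ((Fin T1.v ↪ Fin n) × (Fin T2.v ↪ Fin n)) :=
  {pp | pp.1 ∈ PiV n hn T1 ∧ pp.2 ∈ PiV n hn T2 ∧
    ∀ (a : Fin T1.v) (b : Fin T2.v), pp.1 a = pp.2 b ↔ (a, b) ∈ M}

/-- An edge of `T1` is matched if its two endpoints are matched to the endpoints of an
edge of `T2`. -/
def EdgeMatched1 (T1 T2 : Template) (M : Finset (Fin T1.v × Fin T2.v))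
    (e : Fin T1.v × Fin T1.v) : Prop :=
  ∃ e' ∈ T2.E, ((e.1, e'.1) ∈ M ∧ (e.2, e'.2) ∈ M) ∨ ((e.1, e'.2) ∈ M ∧ (e.2, e'.1) ∈ M)

/-- An edge of `T2` is matched if its two endpoints are matched to the endpoints of an
edge of `T1`. -/
def EdgeMatched2 (T1 T2 : Template) (M : Finset (Fin T1.v × Fin T2.v))
    (e' : Fin T2.v × Fin T2.v) : Prop :=
  ∃ e ∈ T1.E, ((e.1, e'.1) ∈ M ∧ (e.2, e'.2) ∈ M) ∨ ((e.1, e'.2) ∈ M ∧ (e.2, e'.1) ∈ M)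

/-- `|E_Δ|`: the number of unmatched edges (in either template). -/
def EDeltaCard (T1 T2 : Template) (M : Finset (Fin T1.v × Fin T2.v)) : ℕ :=
  (T1.E.filter fun e => ¬ EdgeMatched1 T1 T2 M e).card +
    (T2.E.filter fun e => ¬ EdgeMatched2 T1 T2 M e).card

/-- `|U^{(1)}|`: the number of unmatched nodes of the first template. -/
def U1card (T1 T2 : Template) (M : Finset (Fin T1.v × Fin T2.v)) : ℕ :=
  (Finset.univ.filter fun a : Fin T1.v => ∀ p ∈ M, (p : Fin T1.v × Fin T2.v).1 ≠ a).card

/-- `|U^{(2)}|`: the number of unmatched nodes of the second template. -/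
def U2card (T1 T2 : Template) (M : Finset (Fin T1.v × Fin T2.v)) : ℕ :=
  (Finset.univ.filter fun b : Fin T2.v => ∀ p ∈ M, (p : Fin T1.v × Fin T2.v).2 ≠ b).card

/-- A pair of matched nodes is semi-matched if one of them is incident to an unmatched edge. -/
def IsSemiMatched (T1 T2 : Template) (M : Finset (Fin T1.v × Fin T2.v))
    (p : Fin T1.v × Fin T2.v) : Prop :=
  (∃ e ∈ T1.E, (e.1 = p.1 ∨ e.2 = p.1) ∧ ¬ EdgeMatched1 T1 T2 M e) ∨
  (∃ e' ∈ T2.E, (e'.1 = p.2 ∨ e'.2 = p.2) ∧ ¬ EdgeMatched2 T1 T2 M e')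

/-- `M_SM`: the semi-matched pairs of `M`. -/
def MSM (T1 T2 : Template) (M : Finset (Fin T1.v × Fin T2.v)) :
    Finset (Fin T1.v × Fin T2.v) :=
  M.filter (IsSemiMatched T1 T2 M)

/-- `M_PM`: the perfectly matched pairs of `M`. -/
def MPM (T1 T2 : Template) (M : Finset (Fin T1.v × Fin T2.v)) :
    Finset (Fin T1.v × Fin T2.v) :=
  M.filter fun p => ¬ IsSemiMatched T1 T2 M p

/-- A node is isolated if it is incident to no edge. -/
def IsIsolated (T : Template) (w : Fin T.v) : Prop :=
  ∀ e ∈ T.E, e.1 ≠ w ∧ e.2 ≠ w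

/-- The pruned matching `M⁻`: remove the pair of first (resp. second) distinguished nodes
whenever that node is isolated in `T1` or in `T2`. -/
def Mminus (T1 T2 : Template) (M : Finset (Fin T1.v × Fin T2.v)) :
    Finset (Fin T1.v × Fin T2.v) :=
  M.filter fun p =>
    ¬ ((p = (T1.v1, T2.v1) ∧ (IsIsolated T1 T1.v1 ∨ IsIsolated T2 T2.v1)) ∨
       (p = (T1.v2, T2.v2) ∧ (IsIsolated T1 T1.v2 ∨ IsIsolated T2 T2.v2)))

/-- `M ∈ M*`: every connected component of `T1` and of `T2` meets the pruned matching. -/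
def InMstar (T1 T2 : Template) (M : Finset (Fin T1.v × Fin T2.v)) : Prop :=
  (∀ w : Fin T1.v, ∃ p ∈ Mminus T1 T2 M, T1.graph.Reachable w p.1) ∧
  (∀ w : Fin T2.v, ∃ p ∈ Mminus T1 T2 M, T2.graph.Reachable w p.2)


/-- Canonical representative (the minimum) of the connected component of `w`. -/
def compRep (T : Template) (w : Fin T.v) : Fin T.v :=
  (Finset.univ.filter fun u => T.graph.Reachable w u).min'
    ⟨w, by
      simp only [Finset.mem_filter, Finset.mem_univ, true_and]
      exact SimpleGraph.Reachable.refl w⟩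

/-- The edges of the connected component of `w`. -/
def compEdges (T : Template) (w : Fin T.v) : Finset (Fin T.v × Fin T.v) :=
  T.E.filter fun e => T.graph.Reachable e.1 w

/-- The monomial attached to the connected component of `w`. -/
def Pcomp (n : ℕ) (q : ℝ) (T : Template) (π : Fin T.v ↪ Fin n) (w : Fin T.v)
    (y : EdgeConf n) : ℝ :=
  ∏ e ∈ compEdges T w, Ymat n q y (π e.1) (π e.2)

/-- Representatives of the connected components of `T` containing at least one edge. -/
def edgeCompReps (T : Template) : Finset (Fin T.v) :=
  Finset.univ.filter fun w => compRep T w = w ∧ ∃ e ∈ T.E, T.graph.Reachable e.1 w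

/-- The centered polynomial `P̄_{G,π} = ∏_l (P_{G_l,π} - E[P_{G_l,π}])`, the product running
over the connected components with at least one edge. -/
def Pbar (n K : ℕ) (q lam : ℝ) (T : Template) (π : Fin T.v ↪ Fin n) (y : EdgeConf n) : ℝ :=
  ∏ w ∈ edgeCompReps T,
    (Pcomp n q T π w y - expec n K q lam fun _ y' => Pcomp n q T π w y')

/-- `|Aut(G)|`: the number of automorphisms of the template fixing both distinguished nodes. -/
def autCard (T : Template) : ℕ :=
  Nat.card {σ : Equiv.Perm (Fin T.v) //
    σ T.v1 = T.v1 ∧ σ T.v2 = T.v2 ∧ ∀ a b, T.graph.Adj a b ↔ T.graph.Adj (σ a) (σ b)}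

/-- The variance proxy `𝕍(G) = ((n-2)!/(n-|V|)!) |Aut(G)| E[P_{G,π}²]
  = |Aut(G)| ∑_{π ∈ Π_V} E[P_{G,π}²]`. -/
def VG (n K : ℕ) (hn : 2 ≤ n) (q lam : ℝ) (T : Template) : ℝ :=
  autCard T * ∑ π ∈ PiV n hn T, expec n K q lam fun _ y => PG n q T π y ^ 2

/-- The normalized invariant polynomial `Ψ_G = P̄_G / √𝕍(G)`. -/
def Psi (n K : ℕ) (hn : 2 ≤ n) (q lam : ℝ) (T : Template) (y : EdgeConf n) : ℝ :=
  (∑ π ∈ PiV n hn T, Pbar n K q lam T π y) / Real.sqrt (VG n K hn q lam T)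

/-- A template suitable for `𝒢_{≤D}`: between `1` and `D` edges, and no isolated node
except possibly the distinguished ones. -/
def GoodTemplate (D : ℕ) (T : Template) : Prop :=
  1 ≤ T.E.card ∧ T.E.card ≤ D ∧
    ∀ w : Fin T.v, w ≠ T.v1 → w ≠ T.v2 → ¬ IsIsolated T w

/-- Equivalence of templates: a graph isomorphism mapping distinguished nodes to
distinguished nodes. -/
def TEquiv (T1 T2 : Template) : Prop :=
  ∃ σ : Fin T1.v ≃ Fin T2.v, σ T1.v1 = T2.v1 ∧ σ T1.v2 = T2.v2 ∧
    ∀ a b, T1.graph.Adj a b ↔ T2.graph.Adj (σ a) (σ b)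

/-- `𝒢` is a valid choice for `𝒢_{≤D}`: a maximal collection of pairwise non-equivalent
good templates. -/
def IsTemplateBasis (D : ℕ) (𝒢 : Set Template) : Prop :=
  (∀ T ∈ 𝒢, GoodTemplate D T) ∧
  (∀ T1 ∈ 𝒢, ∀ T2 ∈ 𝒢, TEquiv T1 T2 → T1 = T2) ∧
  ∀ T, GoodTemplate D T → ∃ T' ∈ 𝒢, TEquiv T T'

/-- A matching containing the pairs of distinguished nodes. -/
def IsMatching12 (T1 T2 : Template) (M : Finset (Fin T1.v × Fin T2.v)) : Prop :=
  IsMatching T1 T2 M ∧ (T1.v1, T2.v1) ∈ M ∧ (T1.v2, T2.v2) ∈ M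

/-- The edit distance `d(G^{(1)}, G^{(2)}) = min_M |E_Δ|`. -/
def editDist (T1 T2 : Template) : ℕ :=
  sInf {k : ℕ | ∃ M : Finset (Fin T1.v × Fin T2.v),
    IsMatching12 T1 T2 M ∧ k = EDeltaCard T1 T2 M}

open scoped SetRel

section SemiMatched

variable {α β : Type*}

/-- The edges of `G` that the matching `M` does not carry to an edge of `H`, as a graph on the
nodes of `G`. For the unmatched edges of `H`, use `M.inv`. -/
def unmatchedEdges (G : SimpleGraph α) (H : SimpleGraph β) (M : SetRel α β) : SimpleGraph α where
  Adj a c := G.Adj a c ∧ ¬ ∃ b d, a ~[M] b ∧ c ~[M] d ∧ H.Adj b d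
  symm := ⟨fun _ _ h => ⟨h.1.symm, fun ⟨b, d, hb, hd, hbd⟩ => h.2 ⟨d, b, hd, hb, hbd.symm⟩⟩⟩
  loopless := ⟨fun _ h => h.1.ne rfl⟩

/-- `M_SM` for a matching `M` between arbitrary simple graphs: the pairs of `M` with a node
incident to an unmatched edge. -/
def semiMatched (G : SimpleGraph α) (H : SimpleGraph β) (M : SetRel α β) : SetRel α β :=
  {p ∈ M | (∃ c, (unmatchedEdges G H M).Adj p.1 c) ∨ ∃ d, (unmatchedEdges H G M.inv).Adj p.2 d}

variable {G : SimpleGraph α} {H : SimpleGraph β} {M : SetRel α β}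

lemma semiMatched_subset : semiMatched G H M ⊆ M := fun _ h => h.1

lemma semiMatched_inv : semiMatched H G M.inv = (semiMatched G H M).inv := by
  ext ⟨b, a⟩
  exact and_congr_right fun _ => or_comm

end SemiMatched

section Transfer

variable {α β : Type*} {M N O : SetRel α β} {a c x y : α}

/-- The relation between `a` and the `N`-preimage of the `M`-partner of `a`, completed by the
identity on the nodes that `M` does not match. -/
def transfer (M N : SetRel α β) : SetRel α α :=
  (M ○ N.inv) ∪ {p | p.1 ∉ M.dom ∧ p.2 = p.1}

lemma mem_transfer :
    a ~[transfer M N] x ↔ (∃ b, a ~[M] b ∧ x ~[N] b) ∨ (a ∉ M.dom ∧ x = a) :=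
  Iff.rfl

lemma exists_transfer (hcod : M.cod ⊆ N.cod) (a : α) : ∃ x, a ~[transfer M N] x := by
  by_cases ha : a ∈ M.dom
  · obtain ⟨b, hab⟩ := ha
    obtain ⟨x, hxb⟩ := hcod ⟨a, hab⟩
    exact ⟨x, Or.inl ⟨b, hab, hxb⟩⟩
  · exact ⟨a, Or.inr ⟨ha, rfl⟩⟩

lemma transfer_swap (hdom : N.dom ⊆ M.dom) (hax : a ~[transfer M N] x) :
    x ~[transfer N M] a := by
  rcases mem_transfer.1 hax with ⟨b, hab, hxb⟩ | ⟨ha, rfl⟩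
  · exact Or.inl ⟨b, hxb, hab⟩
  · exact Or.inr ⟨fun h => ha (hdom h), rfl⟩

lemma rel_of_transfer {b : β} (hM : Relator.RightUnique (· ~[M] ·)) (hax : a ~[transfer M N] x)
    (hab : a ~[M] b) : x ~[N] b := by
  rcases mem_transfer.1 hax with ⟨b', hab', hxb'⟩ | ⟨ha, -⟩
  · rwa [hM hab hab']
  · exact absurd ⟨b, hab⟩ ha

lemma rightUnique_transfer (hM : Relator.RightUnique (· ~[M] ·))
    (hN : Relator.LeftUnique (· ~[N] ·)) : Relator.RightUnique (· ~[transfer M N] ·) := by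
  intro a x y hax hay
  rcases mem_transfer.1 hax with ⟨b, hab, hxb⟩ | ⟨ha, rfl⟩
  · exact hN hxb (rel_of_transfer hM hay hab)
  · rcases mem_transfer.1 hay with ⟨b, hab, -⟩ | ⟨-, rfl⟩
    · exact absurd ⟨b, hab⟩ ha
    · rfl

lemma subset_of_transfer_subset (hdom : M.dom ⊆ N.dom) (hcod : M.cod ⊆ O.cod)
    (hO : Relator.RightUnique (· ~[O] ·)) (h : transfer M O ⊆ transfer N O) : M ⊆ N := by
  rintro ⟨a, b⟩ hab
  obtain ⟨x, hxb⟩ := hcod ⟨a, hab⟩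
  have hax : a ~[transfer N O] x := h (Or.inl ⟨b, hab, hxb⟩)
  rcases mem_transfer.1 hax with ⟨b', hab', hxb'⟩ | ⟨ha, -⟩
  · rwa [hO hxb hxb']
  · exact absurd (hdom ⟨b, hab⟩) ha

variable {G : SimpleGraph α} {H : SimpleGraph β}

lemma eq_of_transfer_of_unmatchedEdges_adj (hN : Relator.LeftUnique (· ~[N] ·))
    (hMN : semiMatched G H M ⊆ N) (hac : (unmatchedEdges G H M).Adj a c)
    (hax : a ~[transfer M N] x) : x = a := by
  rcases mem_transfer.1 hax with ⟨b, hab, hxb⟩ | ⟨-, hxa⟩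
  · exact hN hxb (hMN ⟨hab, Or.inl ⟨c, hac⟩⟩)
  · exact hxa

lemma adj_of_transfer (hM : Relator.BiUnique (· ~[M] ·)) (hN : Relator.LeftUnique (· ~[N] ·))
    (hMN : semiMatched G H M ⊆ N) (hNM : semiMatched G H N ⊆ M)
    (hax : a ~[transfer M N] x) (hcy : c ~[transfer M N] y) (hac : G.Adj a c) : G.Adj x y := by
  by_cases hunm : (unmatchedEdges G H M).Adj a c
  · rwa [eq_of_transfer_of_unmatchedEdges_adj hN hMN hunm hax,
      eq_of_transfer_of_unmatchedEdges_adj hN hMN hunm.symm hcy]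
  obtain ⟨b, d, hab, hcd, hbd⟩ := not_not.1 fun h => hunm ⟨hac, h⟩
  have hxb : x ~[N] b := rel_of_transfer hM.2 hax hab
  have hyd : y ~[N] d := rel_of_transfer hM.2 hcy hcd
  by_cases hunm' : (unmatchedEdges H G N.inv).Adj b d
  · have hxb' : x ~[M] b := hNM ⟨hxb, Or.inr ⟨d, hunm'⟩⟩
    have hyd' : y ~[M] d := hNM ⟨hyd, Or.inr ⟨b, hunm'.symm⟩⟩
    rwa [hM.1 hxb' hab, hM.1 hyd' hcd]
  · obtain ⟨x', y', hx'b, hy'd, hadj⟩ := not_not.1 fun h => hunm' ⟨hbd, h⟩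
    rwa [hN hxb hx'b, hN hyd hy'd]

end Transfer

/-- Membership of `M` in the shadow class `M_shadow(W₁, W₂, S)` between arbitrary simple graphs,
for matchings required to contain the set `P` of distinguished pairs. -/
structure InShadowClass {α β : Type*} (G : SimpleGraph α) (H : SimpleGraph β) (P : SetRel α β)
    (W₁ : Set α) (W₂ : Set β) (S M : SetRel α β) : Prop where
  biUnique : Relator.BiUnique (· ~[M] ·)
  distinguished_subset : P ⊆ M
  semiMatched_eq : semiMatched G H M = S
  compl_dom_eq : M.domᶜ = W₁
  compl_cod_eq : M.codᶜ = W₂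

namespace InShadowClass

variable {α β : Type*} {G : SimpleGraph α} {H : SimpleGraph β} {P S M N O : SetRel α β}
  {W₁ : Set α} {W₂ : Set β}

lemma inv (hM : InShadowClass G H P W₁ W₂ S M) :
    InShadowClass H G P.inv W₂ W₁ S.inv M.inv where
  biUnique := ⟨fun _ _ _ h h' => hM.biUnique.2 h h', fun _ _ _ h h' => hM.biUnique.1 h h'⟩
  distinguished_subset := SetRel.inv_mono hM.distinguished_subset
  semiMatched_eq := by rw [semiMatched_inv, hM.semiMatched_eq]
  compl_dom_eq := hM.compl_cod_eq
  compl_cod_eq := hM.compl_dom_eq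

lemma dom_eq (hM : InShadowClass G H P W₁ W₂ S M) (hN : InShadowClass G H P W₁ W₂ S N) :
    M.dom = N.dom :=
  compl_injective (hM.compl_dom_eq.trans hN.compl_dom_eq.symm)

lemma cod_eq (hM : InShadowClass G H P W₁ W₂ S M) (hN : InShadowClass G H P W₁ W₂ S N) :
    M.cod = N.cod :=
  compl_injective (hM.compl_cod_eq.trans hN.compl_cod_eq.symm)

lemma semiMatched_subset (hM : InShadowClass G H P W₁ W₂ S M)
    (hN : InShadowClass G H P W₁ W₂ S N) : semiMatched G H M ⊆ N := by
  rw [hM.semiMatched_eq, ← hN.semiMatched_eq]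
  exact SBM.semiMatched_subset

/-- The function whose graph is `transfer M N`. -/
def transferFun (hM : InShadowClass G H P W₁ W₂ S M) (hN : InShadowClass G H P W₁ W₂ S N)
    (a : α) : α :=
  (exists_transfer (hM.cod_eq hN).subset a).choose

lemma transferFun_eq_iff (hM : InShadowClass G H P W₁ W₂ S M)
    (hN : InShadowClass G H P W₁ W₂ S N) {a x : α} :
    hM.transferFun hN a = x ↔ a ~[transfer M N] x := by
  have hspec : a ~[transfer M N] hM.transferFun hN a :=
    (exists_transfer (hM.cod_eq hN).subset a).choose_spec
  exact ⟨fun h => h ▸ hspec, rightUnique_transfer hM.biUnique.2 hN.biUnique.1 hspec⟩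

lemma transferFun_transferFun (hM : InShadowClass G H P W₁ W₂ S M)
    (hN : InShadowClass G H P W₁ W₂ S N) (a : α) :
    hN.transferFun hM (hM.transferFun hN a) = a :=
  (hN.transferFun_eq_iff hM).2 <|
    transfer_swap (hN.dom_eq hM).subset ((hM.transferFun_eq_iff hN).1 rfl)

lemma adj_transferFun (hM : InShadowClass G H P W₁ W₂ S M)
    (hN : InShadowClass G H P W₁ W₂ S N) {a c : α} (hac : G.Adj a c) :
    G.Adj (hM.transferFun hN a) (hM.transferFun hN c) :=
  adj_of_transfer hM.biUnique hN.biUnique.1 (hM.semiMatched_subset hN) (hN.semiMatched_subset hM)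
    ((hM.transferFun_eq_iff hN).1 rfl) ((hM.transferFun_eq_iff hN).1 rfl) hac

/-- The automorphism of `G` whose graph is `transfer M N`, for `M` and `N` in the same shadow
class. -/
def transferIso (hM : InShadowClass G H P W₁ W₂ S M) (hN : InShadowClass G H P W₁ W₂ S N) :
    G ≃g G where
  toFun := hM.transferFun hN
  invFun := hN.transferFun hM
  left_inv := hM.transferFun_transferFun hN
  right_inv := hN.transferFun_transferFun hM
  map_rel_iff' {a c} := by
    refine ⟨fun h => ?_, hM.adj_transferFun hN⟩
    simpa only [Equiv.coe_fn_mk, transferFun_transferFun] using hN.adj_transferFun hM h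

lemma transferIso_apply_eq_iff (hM : InShadowClass G H P W₁ W₂ S M)
    (hN : InShadowClass G H P W₁ W₂ S N) {a x : α} :
    hM.transferIso hN a = x ↔ a ~[transfer M N] x :=
  hM.transferFun_eq_iff hN

lemma transferIso_mem_fixingSubgroup (hM : InShadowClass G H P W₁ W₂ S M)
    (hN : InShadowClass G H P W₁ W₂ S N) :
    hM.transferIso hN ∈ fixingSubgroup (G ≃g G) P.dom := by
  rw [mem_fixingSubgroup_iff]
  rintro a ⟨b, hab⟩
  exact (hM.transferIso_apply_eq_iff hN).2 <|
    Or.inl ⟨b, hM.distinguished_subset hab, hN.distinguished_subset hab⟩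

lemma subset_of_transferIso_eq (hM : InShadowClass G H P W₁ W₂ S M)
    (hN : InShadowClass G H P W₁ W₂ S N) (hO : InShadowClass G H P W₁ W₂ S O)
    (h : hM.transferIso hO = hN.transferIso hO) : M ⊆ N := by
  refine subset_of_transfer_subset (hM.dom_eq hN).subset (hM.cod_eq hO).subset hO.biUnique.2 ?_
  rintro ⟨a, x⟩ hax
  rwa [← hN.transferIso_apply_eq_iff hO, ← h, hM.transferIso_apply_eq_iff hO]

end InShadowClass

section Cardinality

variable {α β : Type*} (G : SimpleGraph α) (H : SimpleGraph β) (P : SetRel α β)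
  (W₁ : Set α) (W₂ : Set β) (S : SetRel α β)

lemma card_inShadowClass_le_card_fixingSubgroup_dom :
    ENat.card {M // InShadowClass G H P W₁ W₂ S M} ≤
      ENat.card (fixingSubgroup (G ≃g G) P.dom) := by
  rcases isEmpty_or_nonempty {M // InShadowClass G H P W₁ W₂ S M} with hempty | ⟨⟨O, hO⟩⟩
  · exact ((ENat.card_eq_zero_iff_empty _).2 hempty).trans_le zero_le
  refine ENat.card_le_card_of_injective
    (f := fun M => ⟨M.2.transferIso hO, M.2.transferIso_mem_fixingSubgroup hO⟩) fun M N h => ?_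
  have hiso : M.2.transferIso hO = N.2.transferIso hO := congrArg Subtype.val h
  exact Subtype.ext <| (M.2.subset_of_transferIso_eq N.2 hO hiso).antisymm
    (N.2.subset_of_transferIso_eq M.2 hO hiso.symm)

lemma card_inShadowClass_le_card_inv :
    ENat.card {M // InShadowClass G H P W₁ W₂ S M} ≤
      ENat.card {M // InShadowClass H G P.inv W₂ W₁ S.inv M} :=
  ENat.card_le_card_of_injective (f := fun M => ⟨M.1.inv, M.2.inv⟩) fun _ _ h =>
    Subtype.ext (congrArg (SetRel.inv ∘ Subtype.val) h)

theorem statement13_general :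
    ENat.card {M // InShadowClass G H P W₁ W₂ S M} ≤
      min (ENat.card (fixingSubgroup (G ≃g G) P.dom))
        (ENat.card (fixingSubgroup (H ≃g H) P.cod)) :=
  le_min (card_inShadowClass_le_card_fixingSubgroup_dom G H P W₁ W₂ S) <|
    (card_inShadowClass_le_card_inv G H P W₁ W₂ S).trans <|
      card_inShadowClass_le_card_fixingSubgroup_dom H G P.inv W₂ W₁ S.inv

end Cardinality

section Template

variable {T1 T2 : Template} {M : Finset (Fin T1.v × Fin T2.v)}

lemma Template.graph_adj_iff (T : Template) {a b : Fin T.v} :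
    T.graph.Adj a b ↔ (a, b) ∈ T.E ∨ (b, a) ∈ T.E := by
  rw [Template.graph, SimpleGraph.fromRel_adj, and_iff_right_iff_imp]
  rintro (h | h)
  · exact (T.hE _ h).ne
  · exact (T.hE _ h).ne'

lemma edgeMatched1_iff {e : Fin T1.v × Fin T1.v} :
    EdgeMatched1 T1 T2 M e ↔ ∃ b d, (e.1, b) ∈ M ∧ (e.2, d) ∈ M ∧ T2.graph.Adj b d := by
  simp only [EdgeMatched1, Template.graph_adj_iff, Prod.exists]
  grind

lemma edgeMatched2_iff {e : Fin T2.v × Fin T2.v} :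
    EdgeMatched2 T1 T2 M e ↔ ∃ a c, (a, e.1) ∈ M ∧ (c, e.2) ∈ M ∧ T1.graph.Adj a c := by
  simp only [EdgeMatched2, Template.graph_adj_iff, Prod.exists]
  grind

lemma exists_edge_not_edgeMatched1_iff {a : Fin T1.v} :
    (∃ e ∈ T1.E, (e.1 = a ∨ e.2 = a) ∧ ¬ EdgeMatched1 T1 T2 M e) ↔
      ∃ c, (unmatchedEdges T1.graph T2.graph M).Adj a c := by
  simp only [edgeMatched1_iff, unmatchedEdges, T1.graph_adj_iff, Finset.mem_coe]
  grind [SimpleGraph.adj_comm]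

lemma exists_edge_not_edgeMatched2_iff {b : Fin T2.v} :
    (∃ e ∈ T2.E, (e.1 = b ∨ e.2 = b) ∧ ¬ EdgeMatched2 T1 T2 M e) ↔
      ∃ d, (unmatchedEdges T2.graph T1.graph (SetRel.inv M)).Adj b d := by
  simp only [edgeMatched2_iff, unmatchedEdges, T2.graph_adj_iff, SetRel.mem_inv, Finset.mem_coe]
  grind [SimpleGraph.adj_comm]

lemma semiMatched_coe : semiMatched T1.graph T2.graph M = MSM T1 T2 M := by
  simp only [MSM, IsSemiMatched, Finset.coe_filter, exists_edge_not_edgeMatched1_iff,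
    exists_edge_not_edgeMatched2_iff]
  rfl

lemma IsMatching.biUnique (hM : IsMatching T1 T2 M) :
    Relator.BiUnique fun a b => (a, b) ∈ M :=
  ⟨fun _ _ _ h h' => congrArg Prod.fst (hM.2 _ h _ h' rfl),
    fun _ _ _ h h' => congrArg Prod.snd (hM.1 _ h _ h' rfl)⟩

/-- The pairs of first and of second distinguished nodes, which `IsMatching12` requires of a
matching. -/
def distinguishedPairs (T1 T2 : Template) : SetRel (Fin T1.v) (Fin T2.v) :=
  {(T1.v1, T2.v1), (T1.v2, T2.v2)}

lemma dom_distinguishedPairs : (distinguishedPairs T1 T2).dom = {T1.v1, T1.v2} := by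
  ext a
  simp [distinguishedPairs, exists_or]

lemma cod_distinguishedPairs : (distinguishedPairs T1 T2).cod = {T2.v1, T2.v2} := by
  ext b
  simp [distinguishedPairs, exists_or]

lemma IsMatching12.inShadowClass (hM : IsMatching12 T1 T2 M) :
    InShadowClass T1.graph T2.graph (distinguishedPairs T1 T2)
      ↑(Finset.univ.filter fun a : Fin T1.v => ∀ p ∈ M, p.1 ≠ a)
      ↑(Finset.univ.filter fun b : Fin T2.v => ∀ p ∈ M, p.2 ≠ b) (MSM T1 T2 M) M where
  biUnique := IsMatching.biUnique hM.1
  distinguished_subset := Set.pair_subset hM.2.1 hM.2.2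
  semiMatched_eq := semiMatched_coe
  compl_dom_eq := by
    ext a
    simp only [Set.mem_compl_iff, SetRel.mem_dom, Finset.mem_coe, Finset.mem_filter_univ]
    grind
  compl_cod_eq := by
    ext b
    simp only [Set.mem_compl_iff, SetRel.mem_cod, Finset.mem_coe, Finset.mem_filter_univ]
    grind

lemma autCard_eq_card_fixingSubgroup (T : Template) :
    autCard T = ENat.card (fixingSubgroup (T.graph ≃g T.graph) {T.v1, T.v2}) := by
  rw [autCard, ← ENat.card_eq_coe_natCard]
  refine ENat.card_congr
    { toFun := fun σ => ⟨⟨σ.1, (σ.2.2.2 _ _).symm⟩, ?_⟩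
      invFun := fun φ => ⟨φ.1.toEquiv, φ.2 ⟨T.v1, Or.inl rfl⟩, φ.2 ⟨T.v2, Or.inr rfl⟩,
        fun _ _ => φ.1.map_adj_iff.symm⟩
      left_inv := fun _ => rfl
      right_inv := fun _ => rfl }
  rintro ⟨_, rfl | rfl⟩
  exacts [σ.2.1, σ.2.2.1]

lemma natCast_min_autCard :
    ((min (autCard T1) (autCard T2) : ℕ) : ℕ∞) =
      min (ENat.card (fixingSubgroup (T1.graph ≃g T1.graph) (distinguishedPairs T1 T2).dom))
        (ENat.card (fixingSubgroup (T2.graph ≃g T2.graph) (distinguishedPairs T1 T2).cod)) := by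
  rw [Nat.mono_cast.map_min, dom_distinguishedPairs, cod_distinguishedPairs,
    autCard_eq_card_fixingSubgroup, autCard_eq_card_fixingSubgroup]

end Template

/-- Shadow matchings: at most `min(|Aut(G¹)|, |Aut(G²)|)` matchings share a given shadow. -/
theorem statement13 (T1 T2 : Template)
    (W1 : Finset (Fin T1.v)) (W2 : Finset (Fin T2.v))
    (Mu : Finset (Fin T1.v × Fin T2.v)) :
    Nat.card {M : Finset (Fin T1.v × Fin T2.v) //
        IsMatching12 T1 T2 M ∧ MSM T1 T2 M = Mu ∧
        (Finset.univ.filter fun a : Fin T1.v =>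
          ∀ p ∈ M, (p : Fin T1.v × Fin T2.v).1 ≠ a) = W1 ∧
        (Finset.univ.filter fun b : Fin T2.v =>
          ∀ p ∈ M, (p : Fin T1.v × Fin T2.v).2 ≠ b) = W2} ≤
      min (autCard T1) (autCard T2) := by
  rw [← ENat.natCast_le_natCast, ← ENat.card_eq_coe_natCard, natCast_min_autCard]
  refine (ENat.card_le_card_of_injective (Subtype.map_injective ?_ Finset.coe_injective)).trans
    (statement13_general T1.graph T2.graph (distinguishedPairs T1 T2) W1 W2 Mu)
  rintro M ⟨hM, rfl, rfl, rfl⟩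
  exact IsMatching12.inShadowClass hM

end SBM
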